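/- Let K be an infinite field, let S = K[X_{1,i_1}·X_{2,i_2}⋯X_{s,i_s} | 1 ≤ i_1 ≤ n_1, …, 1 ≤ i_s ≤ n_s] be the Segre ring (the K-subalgebra of K[X_{j,i}] generated by the products of one variable from each of the s groups), and let R be a standard graded algebra that is a homomorphic image of S via a graded surjection. Let n = dim_K R_1, d > 0, and r ≥ d + n − 1. Then for general linear forms l_{t,1},…,l_{t,s} (t = 1,…,r), where l_{t,j} is a linear form of K[X_{j,1},…,X_{j,n_j}], the r linear forms of R given by the images of the products l_{t,1}·l_{t,2}⋯l_{t,s} satisfy property (Gr,d). -/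

import Mathlib

/-- Polynomial functions on a `K`-vector space `V`: the subalgebra of `V → K`
generated by the linear functionals. -/
def polyFuns (K V : Type*) [Field K] [AddCommGroup V] [Module K V] : Subalgebra K (V → K) :=
  Algebra.adjoin K {f : V → K | ∃ φ : V →ₗ[K] K, ⇑φ = f}

/-- A subset of (the affine space of) a `K`-vector space is Zariski closed if it is the
common zero locus of a family of polynomial functions. -/
def IsZClosed (K : Type*) {V : Type*} [Field K] [AddCommGroup V] [Module K V]
    (Z : Set V) : Prop :=
  ∃ S : Set (V → K), (∀ f ∈ S, f ∈ polyFuns K V) ∧ Z = {v | ∀ f ∈ S, f v = 0}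

/-- A subset is Zariski open if its complement is Zariski closed. -/
def IsZOpen (K : Type*) {V : Type*} [Field K] [AddCommGroup V] [Module K V]
    (U : Set V) : Prop :=
  IsZClosed K Uᶜ

/-- An irreducible variety: a nonempty Zariski closed set which is not the union of two
proper closed subsets. -/
def IsIrredVariety (K : Type*) {V : Type*} [Field K] [AddCommGroup V] [Module K V]
    (W : Set V) : Prop :=
  IsZClosed K W ∧ W.Nonempty ∧
    ∀ Z₁ Z₂ : Set V, IsZClosed K Z₁ → IsZClosed K Z₂ → W ⊆ Z₁ ∪ Z₂ → (W ⊆ Z₁ ∨ W ⊆ Z₂)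

/-- Auxiliary recursion for `wordIdeal`: letters are booleans, `true` standing for the
letter `c` (colon) and `false` for the letter `s` (sum). The natural number argument keeps
track of which linear form is to be used next (0-indexed). -/
def wordIdealAux {R : Type*} [CommRing R] (l : ℕ → R) : ℕ → Ideal R → List Bool → Ideal R
  | _, I, [] => I
  | j, I, a :: o =>
      wordIdealAux l (j + 1)
        (if a then I.colon (Ideal.span {l j}) else I ⊔ Ideal.span {l j}) o

/-- The ideal `I_{l,o}` attached to a sequence of (linear) forms `l` and a word `o` in the
letters `{c, s}` (here `c = true`, `s = false`): starting from `(0)`, the `j`-th letter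
either colons (`c`) or adds (`s`) the `j`-th form. -/
def wordIdeal {R : Type*} [CommRing R] (l : ℕ → R) (o : List Bool) : Ideal R :=
  wordIdealAux l 0 ⊥ o

/-- The degree `d` component `I ∩ R_d` of an ideal `I`, as a `K`-subspace of `𝒜 d`. -/
def homComp {K R : Type*} [Field K] [CommRing R] [Algebra K R]
    (𝒜 : ℕ → Submodule K R) (I : Ideal R) (d : ℕ) : Submodule K (𝒜 d) :=
  Submodule.comap (𝒜 d).subtype (Submodule.restrictScalars K I)

/-- `dim_K (I)_d`, the dimension of the degree `d` component of the (homogeneous) ideal `I`. -/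
noncomputable def homDim {K R : Type*} [Field K] [CommRing R] [Algebra K R]
    (𝒜 : ℕ → Submodule K R) (I : Ideal R) (d : ℕ) : ℕ :=
  Module.finrank K (homComp 𝒜 I d)

/-- `dim_K (R/I)_d`, the dimension of the degree `d` component of `R/I` for a
(homogeneous) ideal `I`, computed as `dim 𝒜 d / (I ∩ 𝒜 d)`. -/
noncomputable def quotDim {K R : Type*} [Field K] [CommRing R] [Algebra K R]
    (𝒜 : ℕ → Submodule K R) (I : Ideal R) (d : ℕ) : ℕ :=
  Module.finrank K ((𝒜 d) ⧸ homComp 𝒜 I d)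

/-- `macaulayDown c d = c_⟨d⟩`: if `c = C(k_d,d) + … + C(k_1,1)` is the `d`-th Macaulay
representation of `c`, then `c_⟨d⟩ = C(k_d - 1,d) + … + C(k_1 - 1,1)`; computed greedily. -/
def macaulayDown : ℕ → ℕ → ℕ
  | _, 0 => 0
  | c, d + 1 =>
      let k := Nat.findGreatest (fun k => Nat.choose k (d + 1) ≤ c) (c + d + 1)
      Nat.choose (k - 1) (d + 1) + macaulayDown (c - Nat.choose k (d + 1)) d

/-- Property (Gr,d) for the linear forms `l 0, …, l (r-1)` (letters: `true = c`,
`false = s`): for every word `o` of length `i ≤ r`,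
(1) if `m ⊄ I_o` and `i < r` then `l_{i+1} ∉ I_o`;
(2) if `i = r` and `|o|_c < d` then `m ⊆ I_o`;
(3) if `i ≤ r - 2` then `dim (I_{o,c,s})_{d - |o|_c - 1} ≤ dim (I_{o,s,c})_{d - |o|_c - 1}`. -/
def GrProp {K R : Type*} [Field K] [CommRing R] [Algebra K R]
    (𝒜 : ℕ → Submodule K R) [GradedAlgebra 𝒜] (l : ℕ → R) (r d : ℕ) : Prop :=
  ∀ o : List Bool, o.length ≤ r →
    (¬ (HomogeneousIdeal.irrelevant 𝒜).toIdeal ≤ wordIdeal l o → o.length < r →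
        l o.length ∉ wordIdeal l o) ∧
    (o.length = r → o.count true < d →
        (HomogeneousIdeal.irrelevant 𝒜).toIdeal ≤ wordIdeal l o) ∧
    (o.length + 2 ≤ r →
        homDim 𝒜 (wordIdeal l (o ++ [true, false])) (d - o.count true - 1) ≤
          homDim 𝒜 (wordIdeal l (o ++ [false, true])) (d - o.count true - 1))

/-!
When the forms `l_t` depend polynomially on parameters, the graded pieces of the ideals `I_o` are
built from images and preimages under matrices with polynomial entries. Their dimensions are
therefore constant for general parameters, so that each membership `l_{i+1} ∈ I_o` either holds
generically or fails generically. The first alternative forces `m ⊆ I_o`, because `I_o` does not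
depend on `l_{i+1}` and the values of `l_{i+1}` span `R_1`; this is (1). By (1) each letter `s`
raises `dim (I_o)_1` until `m ⊆ I_o`, and a word of length `r ≥ d + n - 1` with fewer than `d`
letters `c` has at least `n` letters `s`; this is (2). For (3), exchanging two general forms leaves
the generic dimension of `(I_o : a) + (b)` unchanged, and `(I_o : b) + (a) ⊆ (I_o + (a)) : b`.
Products of linear forms are a polynomial family of this kind, since the Segre monomials are among
them.
-/

section Generic

variable {K V V' : Type*} [Field K] [AddCommGroup V] [Module K V] [AddCommGroup V'] [Module K V']

lemma coe_mem_polyFuns (φ : V →ₗ[K] K) : ⇑φ ∈ polyFuns K V :=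
  Algebra.subset_adjoin ⟨φ, rfl⟩

lemma const_mem_polyFuns (c : K) : (fun _ => c) ∈ polyFuns K V :=
  (polyFuns K V).algebraMap_mem c

lemma comp_affineMap_mem_polyFuns {f : V → K} (hf : f ∈ polyFuns K V) (σ : V' →ᵃ[K] V) :
    f ∘ σ ∈ polyFuns K V' := by
  induction hf using Algebra.adjoin_induction with
  | mem _ hφ =>
    obtain ⟨φ, rfl⟩ := hφ
    have hdecomp : ⇑φ ∘ σ = ⇑(φ ∘ₗ σ.linear) + fun _ => φ (σ 0) := by
      funext v
      simp [AffineMap.decomp' σ]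
    exact hdecomp ▸ add_mem (coe_mem_polyFuns _) (const_mem_polyFuns _)
  | algebraMap c => exact const_mem_polyFuns c
  | add _ _ _ _ hf hg => exact add_mem hf hg
  | mul _ _ _ _ hf hg => exact mul_mem hf hg

lemma exists_polynomial_of_mem_polyFuns {f : K → K} (hf : f ∈ polyFuns K K) :
    ∃ p : Polynomial K, f = fun t => p.eval t := by
  induction hf using Algebra.adjoin_induction with
  | mem _ hφ =>
    obtain ⟨φ, rfl⟩ := hφ
    refine ⟨Polynomial.X * Polynomial.C (φ 1), funext fun t => ?_⟩
    simp
  | algebraMap c => exact ⟨Polynomial.C c, by ext; simp⟩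
  | add _ _ _ _ hf hg =>
    obtain ⟨p, rfl⟩ := hf
    obtain ⟨q, rfl⟩ := hg
    exact ⟨p + q, by ext; simp⟩
  | mul _ _ _ _ hf hg =>
    obtain ⟨p, rfl⟩ := hf
    obtain ⟨q, rfl⟩ := hg
    exact ⟨p * q, by ext; simp⟩

lemma exists_ne_zero_and_ne_zero_of_mem_polyFuns [Infinite K] {f g : V → K}
    (hf : f ∈ polyFuns K V) (hg : g ∈ polyFuns K V) {u v : V} (hu : f u ≠ 0) (hv : g v ≠ 0) :
    ∃ w, f w ≠ 0 ∧ g w ≠ 0 := by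
  let line : K →ᵃ[K] V := AffineMap.lineMap u v
  obtain ⟨p, hp⟩ := exists_polynomial_of_mem_polyFuns (comp_affineMap_mem_polyFuns hf line)
  obtain ⟨q, hq⟩ := exists_polynomial_of_mem_polyFuns (comp_affineMap_mem_polyFuns hg line)
  have hp0 : p ≠ 0 := by
    rintro rfl
    exact hu (by simpa [line] using congrFun hp 0)
  have hq0 : q ≠ 0 := by
    rintro rfl
    exact hv (by simpa [line] using congrFun hq 1)
  obtain ⟨t, ht⟩ : ∃ t, (p * q).eval t ≠ 0 := by
    by_contra! hzero
    exact mul_ne_zero hp0 hq0 (Polynomial.funext (by simpa using hzero))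
  rw [Polynomial.eval_mul] at ht
  exact ⟨line t, (congrFun hp t).trans_ne (left_ne_zero_of_mul ht),
    (congrFun hq t).trans_ne (right_ne_zero_of_mul ht)⟩

lemma isZOpen_ne_zero {f : V → K} (hf : f ∈ polyFuns K V) : IsZOpen K {v | f v ≠ 0} :=
  ⟨{f}, by simpa using hf, by ext; simp⟩

lemma IsZOpen.exists_ne_zero {U : Set V} (hU : IsZOpen K U) {u : V} (hu : u ∈ U) :
    ∃ f ∈ polyFuns K V, f u ≠ 0 ∧ {v | f v ≠ 0} ⊆ U := by
  obtain ⟨S, hS, hUS⟩ := hU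
  have mem_iff (v : V) : v ∈ U ↔ ∃ f ∈ S, f v ≠ 0 := by
    rw [← not_iff_not, ← Set.mem_compl_iff, hUS]
    simp
  obtain ⟨f, hfS, hfu⟩ := (mem_iff u).1 hu
  exact ⟨f, hS f hfS, hfu, fun v hv => (mem_iff v).2 ⟨f, hfS, hv⟩⟩

variable (K V) in
/-- The filter of subsets of `V` containing a nonempty Zariski open set, so that
`∀ᶠ v in zariskiGeneric K V, P v` reads "`P` holds for general `v`". It is closed under
intersections because affine space over an infinite field is irreducible. -/
def zariskiGeneric [Infinite K] : Filter V where
  sets := {s | ∃ U, IsZOpen K U ∧ U.Nonempty ∧ U ⊆ s}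
  univ_sets := ⟨{v | (1 : V → K) v ≠ 0}, isZOpen_ne_zero (one_mem _), ⟨0, by simp⟩, by simp⟩
  sets_of_superset := fun ⟨U, hU, hne, hUs⟩ hst => ⟨U, hU, hne, hUs.trans hst⟩
  inter_sets := by
    rintro s t ⟨U, hU, ⟨u, hu⟩, hUs⟩ ⟨U', hU', ⟨u', hu'⟩, hUt⟩
    obtain ⟨f, hf, hfu, hfU⟩ := hU.exists_ne_zero hu
    obtain ⟨g, hg, hgu, hgU⟩ := hU'.exists_ne_zero hu'
    obtain ⟨w, hfw, hgw⟩ := exists_ne_zero_and_ne_zero_of_mem_polyFuns hf hg hfu hgu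
    exact ⟨{v | (f * g) v ≠ 0}, isZOpen_ne_zero (mul_mem hf hg), ⟨w, mul_ne_zero hfw hgw⟩,
      fun v hv => ⟨hUs (hfU (left_ne_zero_of_mul hv)), hUt (hgU (right_ne_zero_of_mul hv))⟩⟩

variable [Infinite K]

instance zariskiGeneric_neBot : (zariskiGeneric K V).NeBot := by
  refine ⟨fun hbot => ?_⟩
  obtain ⟨U, -, hne, hU⟩ := Filter.empty_mem_iff_bot.2 hbot
  exact hne.ne_empty (Set.subset_empty_iff.1 hU)

lemma eventually_ne_zero_of_mem_polyFuns {f : V → K} (hf : f ∈ polyFuns K V) {u : V}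
    (hu : f u ≠ 0) : ∀ᶠ v in zariskiGeneric K V, f v ≠ 0 :=
  ⟨_, isZOpen_ne_zero hf, ⟨u, hu⟩, subset_rfl⟩

lemma IsZOpen.eventually_comp_affineMap {U : Set V} (hU : IsZOpen K U) (σ : V' →ᵃ[K] V) {u : V'}
    (hu : σ u ∈ U) : ∀ᶠ v in zariskiGeneric K V', σ v ∈ U := by
  obtain ⟨f, hf, hfu, hfU⟩ := hU.exists_ne_zero hu
  exact (eventually_ne_zero_of_mem_polyFuns (comp_affineMap_mem_polyFuns hf σ) hfu).mono
    fun _ hv => hfU hv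

lemma tendsto_zariskiGeneric_of_surjective {σ : V' →ᵃ[K] V} (hσ : Function.Surjective σ) :
    Filter.Tendsto σ (zariskiGeneric K V') (zariskiGeneric K V) := by
  rintro s ⟨U, hU, ⟨w, hw⟩, hUs⟩
  obtain ⟨u, rfl⟩ := hσ w
  exact (hU.eventually_comp_affineMap σ hw).mono fun _ hv => hUs hv

lemma eventually_eventually_update {ι : Type*} [DecidableEq ι] (i : ι) {P : (ι → V) → Prop}
    (hP : ∀ᶠ y in zariskiGeneric K (ι → V), P y) :
    ∀ᶠ y in zariskiGeneric K (ι → V), ∀ᶠ m in zariskiGeneric K V, P (Function.update y i m) := by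
  obtain ⟨U, hU, hne, hUP⟩ := hP
  refine ⟨U, hU, hne, fun y hy => ?_⟩
  let σ : V →ᵃ[K] (ι → V) :=
    (LinearMap.single K (fun _ => V) i).toAffineMap +
      AffineMap.const K V (Function.update y i 0)
  have hσ (m : V) : σ m = Function.update y i m := by
    ext k
    rcases eq_or_ne k i with rfl | hk
    · simp [σ]
    · simp [σ, hk]
  have hslice : ∀ᶠ m in zariskiGeneric K V, σ m ∈ U :=
    hU.eventually_comp_affineMap σ (u := y i) (by rwa [hσ, Function.update_eq_self])
  exact hslice.mono fun m hm => hUP (hσ m ▸ hm)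

end Generic

section PolyMap

variable {K V V' E F : Type*} [Field K] [AddCommGroup V] [Module K V]
  [AddCommGroup V'] [Module K V'] [AddCommGroup E] [Module K E] [AddCommGroup F] [Module K F]

variable (K) in
/-- A polynomial map between vector spaces: every linear functional of the target pulls back to a
polynomial function. A polynomial family of linear maps `A : V → E →ₗ[K] F` is one such that
`fun v => A v x` is a polynomial map for every `x`. -/
def IsPolyMap (f : V → E) : Prop :=
  ∀ φ : E →ₗ[K] K, (fun v => φ (f v)) ∈ polyFuns K V

lemma isPolyMap_const (x : E) : IsPolyMap K (fun _ : V => x) :=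
  fun φ => const_mem_polyFuns (φ x)

lemma IsPolyMap.add {f g : V → E} (hf : IsPolyMap K f) (hg : IsPolyMap K g) :
    IsPolyMap K (fun v => f v + g v) := fun φ => by
  simpa only [map_add] using! add_mem (hf φ) (hg φ)

lemma IsPolyMap.linearMap_comp {f : V → E} (hf : IsPolyMap K f) (ψ : E →ₗ[K] F) :
    IsPolyMap K (fun v => ψ (f v)) :=
  fun φ => hf (φ ∘ₗ ψ)

lemma IsPolyMap.comp_linearMap {f : V → E} (hf : IsPolyMap K f) (σ : V' →ₗ[K] V) :
    IsPolyMap K (fun v => f (σ v)) :=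
  fun φ => comp_affineMap_mem_polyFuns (hf φ) σ.toAffineMap

lemma IsPolyMap.codRestrict {p : Submodule K E} {f : V → E} (hf : IsPolyMap K f)
    (hp : ∀ v, f v ∈ p) : IsPolyMap K (fun v => (⟨f v, hp v⟩ : p)) := by
  intro φ
  obtain ⟨ψ, rfl⟩ := φ.exists_extend
  exact hf ψ

lemma IsPolyMap.linearMap_apply [FiniteDimensional K E] {f : V → E} (hf : IsPolyMap K f)
    {A : V → E →ₗ[K] F} (hA : ∀ x, IsPolyMap K fun v => A v x) :
    IsPolyMap K (fun v => A v (f v)) := by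
  intro φ
  let b := Module.finBasis K E
  have expand : (fun v => φ (A v (f v))) =
      ∑ i, (fun v => b.coord i (f v)) * (fun v => φ (A v (b i))) := by
    funext v
    conv_lhs => rw [← b.sum_repr (f v)]
    simp only [map_sum, map_smul, smul_eq_mul, Finset.sum_apply, Pi.mul_apply,
      Module.Basis.coord_apply]
  rw [expand]
  exact sum_mem fun i _ => mul_mem (hf _) (hA _ _)

lemma IsPolyMap.forall_mem_of_eventually_mem [Infinite K] {f : V → E} (hf : IsPolyMap K f)
    {N : Submodule K E} (hN : ∀ᶠ v in zariskiGeneric K V, f v ∈ N) (v : V) : f v ∈ N := by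
  by_contra hv
  obtain ⟨φ, hφv, hNφ⟩ := Submodule.exists_le_ker_of_notMem hv
  obtain ⟨w, hwN, hφw⟩ :=
    (hN.and (eventually_ne_zero_of_mem_polyFuns (hf φ) hφv)).exists
  exact hφw (hNφ hwN)

lemma det_mem_polyFuns {n : Type*} [Fintype n] [DecidableEq n] {M : V → Matrix n n K}
    (hM : ∀ i j, (fun v => M v i j) ∈ polyFuns K V) : (fun v => (M v).det) ∈ polyFuns K V := by
  have expand : (fun v => (M v).det) =
      ∑ σ : Equiv.Perm n, (Equiv.Perm.sign σ : ℤ) • ∏ i, fun v => M v (σ i) i := by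
    funext v
    simp [Matrix.det_apply, Units.smul_def]
  rw [expand]
  exact sum_mem fun σ _ => zsmul_mem (prod_mem fun i _ => hM _ _) _

lemma card_le_finrank_range_of_det_ne_zero {n : Type*} [Fintype n] [DecidableEq n]
    [FiniteDimensional K F] (A : E →ₗ[K] F) (x : n → E) (φ : n → F →ₗ[K] K)
    (hdet : (Matrix.of fun i j => φ j (A (x i))).det ≠ 0) :
    Fintype.card n ≤ Module.finrank K (LinearMap.range A) := by
  have hindep : LinearIndependent K (fun i => A.rangeRestrict (x i)) :=
    .of_comp (LinearMap.pi φ ∘ₗ (LinearMap.range A).subtype)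
      (Matrix.linearIndependent_rows_of_det_ne_zero hdet)
  exact hindep.fintype_card_le_finrank

lemma exists_matrix_eq_one_of_range [FiniteDimensional K F] (A : E →ₗ[K] F) :
    ∃ (x : Fin (Module.finrank K (LinearMap.range A)) → E)
      (φ : Fin (Module.finrank K (LinearMap.range A)) → F →ₗ[K] K),
      (Matrix.of fun i j => φ j (A (x i))) = 1 := by
  let b := Module.finBasis K (LinearMap.range A)
  choose x hx using fun i => (b i).2
  choose φ hφ using fun j => (b.coord j).exists_extend
  refine ⟨x, φ, ?_⟩
  ext i j
  calc φ j (A (x i)) = b.coord j (b i) := by rw [hx, ← hφ]; rfl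
    _ = (1 : Matrix _ _ K) i j := by
      simp [Matrix.one_apply, Finsupp.single_apply]

variable [Infinite K]

lemma eventually_finrank_range_le_finrank_range [FiniteDimensional K F] {A : V → E →ₗ[K] F}
    (hA : ∀ x, IsPolyMap K fun v => A v x) (u : V) :
    ∀ᶠ v in zariskiGeneric K V, Module.finrank K (LinearMap.range (A u)) ≤
      Module.finrank K (LinearMap.range (A v)) := by
  obtain ⟨x, φ, hone⟩ := exists_matrix_eq_one_of_range (A u)
  have hdet := det_mem_polyFuns (M := fun v => Matrix.of fun i j => φ j (A v (x i)))
    fun i j => hA (x i) (φ j)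
  refine (eventually_ne_zero_of_mem_polyFuns hdet (u := u) (by simp [hone])).mono fun v hv => ?_
  simpa using card_le_finrank_range_of_det_ne_zero (A v) x φ hv

lemma exists_eventually_finrank_range_eq [FiniteDimensional K F] {A : V → E →ₗ[K] F}
    (hA : ∀ x, IsPolyMap K fun v => A v x) :
    ∃ ρ, ∀ᶠ v in zariskiGeneric K V, Module.finrank K (LinearMap.range (A v)) = ρ := by
  let ranks : Set ℕ := Set.range fun v => Module.finrank K (LinearMap.range (A v))
  have hbdd : BddAbove ranks :=
    ⟨Module.finrank K F, Set.forall_mem_range.2 fun v => Submodule.finrank_le _⟩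
  obtain ⟨u, hu⟩ := Nat.sSup_mem (Set.range_nonempty _) hbdd
  refine ⟨sSup ranks, (eventually_finrank_range_le_finrank_range hA u).mono fun v hv => ?_⟩
  exact le_antisymm (le_csSup hbdd ⟨v, rfl⟩) (hu.symm.trans_le hv)

end PolyMap

section PolyFamily

variable {K V E F W T : Type*} [Field K] [AddCommGroup V] [Module K V]
  [AddCommGroup E] [Module K E] [AddCommGroup F] [Module K F]
  [AddCommGroup W] [Module K W] [AddCommGroup T] [Module K T]

/-- A polynomial family of subspaces of `E`: the preimages `(A v)⁻¹ (im (B v))` for polynomial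
families of linear maps `A` and `B`. Unlike images or kernels alone, these are stable under both
adding polynomial images and taking polynomial preimages. The auxiliary spaces are coordinate
spaces so as not to quantify over types; see `isPolyFamily_comap_range` for arbitrary ones. -/
def IsPolyFamily (N : V → Submodule K E) : Prop :=
  ∃ (m n : ℕ) (A : V → E →ₗ[K] (Fin n → K)) (B : V → (Fin m → K) →ₗ[K] (Fin n → K)),
    (∀ x, IsPolyMap K fun v => A v x) ∧ (∀ w, IsPolyMap K fun v => B v w) ∧
      ∀ v, N v = (LinearMap.range (B v)).comap (A v)

lemma isPolyFamily_comap_range [FiniteDimensional K W] [FiniteDimensional K T]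
    {A : V → E →ₗ[K] T} {B : V → W →ₗ[K] T} (hA : ∀ x, IsPolyMap K fun v => A v x)
    (hB : ∀ w, IsPolyMap K fun v => B v w) :
    IsPolyFamily fun v => (LinearMap.range (B v)).comap (A v) := by
  let eW := (Module.finBasis K W).equivFun
  let eT := (Module.finBasis K T).equivFun
  refine ⟨_, _, fun v => eT.toLinearMap ∘ₗ A v, fun v => eT.toLinearMap ∘ₗ B v ∘ₗ eW.symm,
    fun x => (hA x).linearMap_comp eT.toLinearMap,
    fun w => (hB (eW.symm w)).linearMap_comp eT.toLinearMap, fun v => ?_⟩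
  ext x
  simp [eW.symm.surjective.exists]

lemma comap_sup_map (f : E →ₗ[K] T) (p : Submodule K T) (q : Submodule K E) :
    (p ⊔ q.map f).comap f = p.comap f ⊔ q := by
  refine le_antisymm (fun x hx => ?_) (sup_le (Submodule.comap_mono le_sup_left)
    (Submodule.map_le_iff_le_comap.1 le_sup_right))
  obtain ⟨y, hy, _, ⟨z, hz, rfl⟩, hyz⟩ := Submodule.mem_sup.1 hx
  exact Submodule.mem_sup.2 ⟨x - z, by simpa [← hyz] using hy, z, hz, sub_add_cancel x z⟩

lemma finrank_comap_range_add_finrank_range_coprod [FiniteDimensional K E]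
    [FiniteDimensional K T] (A : E →ₗ[K] T) (B : W →ₗ[K] T) :
    Module.finrank K ((LinearMap.range B).comap A) +
        Module.finrank K (LinearMap.range (A.coprod B)) =
      Module.finrank K E + Module.finrank K (LinearMap.range B) := by
  let C := A.domRestrict ((LinearMap.range B).comap A)
  have hrange : LinearMap.range C = LinearMap.range A ⊓ LinearMap.range B := by
    rw [LinearMap.range_domRestrict, Submodule.map_comap_eq]
  have hker : Module.finrank K (LinearMap.ker C) = Module.finrank K (LinearMap.ker A) := by
    rw [LinearMap.ker_domRestrict]
    exact (Submodule.comapSubtypeEquivOfLe (LinearMap.ker_le_comap A)).finrank_eq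
  have hA := LinearMap.finrank_range_add_finrank_ker A
  have hC := LinearMap.finrank_range_add_finrank_ker C
  have hsup := Submodule.finrank_sup_add_finrank_inf_eq (LinearMap.range A) (LinearMap.range B)
  rw [LinearMap.range_coprod]
  rw [hrange] at hC
  omega

namespace IsPolyFamily

lemma exists_eventually_finrank_eq [Infinite K] [FiniteDimensional K E] {N : V → Submodule K E}
    (hN : IsPolyFamily N) :
    ∃ δ, ∀ᶠ v in zariskiGeneric K V, Module.finrank K (N v) = δ := by
  obtain ⟨m, n, A, B, hA, hB, hN⟩ := hN
  obtain ⟨ρ, hρ⟩ := exists_eventually_finrank_range_eq hB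
  obtain ⟨τ, hτ⟩ := exists_eventually_finrank_range_eq (A := fun v => (A v).coprod (B v))
    fun x => (hA x.1).add (hB x.2)
  refine ⟨Module.finrank K E + ρ - τ, (hρ.and hτ).mono ?_⟩
  rintro v ⟨rfl, rfl⟩
  rw [hN, ← finrank_comap_range_add_finrank_range_coprod, Nat.add_sub_cancel]

lemma bot [FiniteDimensional K E] : IsPolyFamily fun _ : V => (⊥ : Submodule K E) := by
  simpa using isPolyFamily_comap_range (V := V) (A := fun _ => (LinearMap.id : E →ₗ[K] E))
    (B := fun _ => (0 : E →ₗ[K] E)) (fun x => isPolyMap_const x) (fun _ => isPolyMap_const 0)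

lemma comap [FiniteDimensional K E] {N : V → Submodule K E} (hN : IsPolyFamily N)
    {L : V → F →ₗ[K] E} (hL : ∀ x, IsPolyMap K fun v => L v x) :
    IsPolyFamily fun v => (N v).comap (L v) := by
  obtain ⟨m, n, A, B, hA, hB, hN⟩ := hN
  refine ⟨m, n, fun v => A v ∘ₗ L v, B, fun x => (hL x).linearMap_apply hA, hB, fun v => ?_⟩
  simp only [hN, Submodule.comap_comp]

lemma sup_range [FiniteDimensional K E] [FiniteDimensional K F] {N : V → Submodule K E}
    (hN : IsPolyFamily N) {L : V → F →ₗ[K] E} (hL : ∀ x, IsPolyMap K fun v => L v x) :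
    IsPolyFamily fun v => N v ⊔ LinearMap.range (L v) := by
  obtain ⟨m, n, A, B, hA, hB, hN⟩ := hN
  have hcomap (v : V) : N v ⊔ LinearMap.range (L v) =
      (LinearMap.range ((B v).coprod (A v ∘ₗ L v))).comap (A v) := by
    rw [hN, LinearMap.range_coprod, LinearMap.range_comp, comap_sup_map]
  simp only [hcomap]
  exact isPolyFamily_comap_range hA fun x => (hB x.1).add ((hL x.2).linearMap_apply hA)

end IsPolyFamily

end PolyFamily

section WordIdeal

variable {R : Type*} [CommRing R]

lemma wordIdealAux_append (l : ℕ → R) (o o' : List Bool) (j : ℕ) (I : Ideal R) :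
    wordIdealAux l j I (o ++ o') = wordIdealAux l (j + o.length) (wordIdealAux l j I o) o' := by
  induction o generalizing j I with
  | nil => rfl
  | cons a o ih =>
    rw [List.cons_append, wordIdealAux, wordIdealAux, ih, List.length_cons,
      Nat.add_right_comm, Nat.add_assoc]

lemma wordIdeal_append_true (l : ℕ → R) (o : List Bool) :
    wordIdeal l (o ++ [true]) = (wordIdeal l o).colon (Ideal.span {l o.length}) := by
  simp [wordIdeal, wordIdealAux_append, wordIdealAux]

lemma wordIdeal_append_false (l : ℕ → R) (o : List Bool) :
    wordIdeal l (o ++ [false]) = wordIdeal l o ⊔ Ideal.span {l o.length} := by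
  simp [wordIdeal, wordIdealAux_append, wordIdealAux]

lemma wordIdeal_append_true_false (l : ℕ → R) (o : List Bool) :
    wordIdeal l (o ++ [true, false]) =
      (wordIdeal l o).colon (Ideal.span {l o.length}) ⊔ Ideal.span {l (o.length + 1)} := by
  simp [wordIdeal, wordIdealAux_append, wordIdealAux]

lemma wordIdeal_append_false_true (l : ℕ → R) (o : List Bool) :
    wordIdeal l (o ++ [false, true]) =
      (wordIdeal l o ⊔ Ideal.span {l o.length}).colon (Ideal.span {l (o.length + 1)}) := by
  simp [wordIdeal, wordIdealAux_append, wordIdealAux]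

lemma wordIdeal_le_wordIdeal_append_singleton (l : ℕ → R) (o : List Bool) (a : Bool) :
    wordIdeal l o ≤ wordIdeal l (o ++ [a]) := by
  cases a
  · rw [wordIdeal_append_false]
    exact le_sup_left
  · rw [wordIdeal_append_true]
    exact Ideal.le_colon

lemma wordIdeal_congr {l l' : ℕ → R} {o : List Bool} (h : ∀ t < o.length, l t = l' t) :
    wordIdeal l o = wordIdeal l' o := by
  induction o using List.reverseRecOn with
  | nil => rfl
  | append_singleton o a ih =>
    rw [List.length_append, List.length_singleton] at h
    have hinit := ih fun t ht => h t (Nat.lt_succ_of_lt ht)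
    have hlast := h o.length (Nat.lt_succ_self _)
    cases a
    · rw [wordIdeal_append_false, wordIdeal_append_false, hinit, hlast]
    · rw [wordIdeal_append_true, wordIdeal_append_true, hinit, hlast]

lemma colon_sup_span_le_sup_span_colon (I : Ideal R) (a b : R) :
    I.colon (Ideal.span {a}) ⊔ Ideal.span {b} ≤ (I ⊔ Ideal.span {b}).colon (Ideal.span {a}) := by
  refine sup_le (Submodule.colon_mono le_sup_left subset_rfl) ?_
  rw [Ideal.span_singleton_le_iff_mem, Ideal.mem_colon_span_singleton]
  exact Ideal.mem_sup_right (Ideal.mul_mem_right _ _ (Ideal.mem_span_singleton_self b))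

end WordIdeal

section GradedComponents

variable {K R : Type*} [Field K] [CommRing R] [Algebra K R] {𝒜 : ℕ → Submodule K R}

lemma mem_homComp {I : Ideal R} {e : ℕ} {x : 𝒜 e} : x ∈ homComp 𝒜 I e ↔ (x : R) ∈ I := Iff.rfl

lemma homDim_mono {I J : Ideal R} (h : I ≤ J) (e : ℕ) [FiniteDimensional K (𝒜 e)] :
    homDim 𝒜 I e ≤ homDim 𝒜 J e :=
  Submodule.finrank_mono fun _ hx => h hx

lemma homDim_sup_span_eq_iff {I : Ideal R} {e : ℕ} [FiniteDimensional K (𝒜 e)] {a : R}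
    (ha : a ∈ 𝒜 e) : homDim 𝒜 (I ⊔ Ideal.span {a}) e = homDim 𝒜 I e ↔ a ∈ I := by
  refine ⟨fun hdim => ?_, fun hmem => ?_⟩
  · have hle : homComp 𝒜 I e ≤ homComp 𝒜 (I ⊔ Ideal.span {a}) e :=
      fun _ hx => Ideal.mem_sup_left hx
    have hmem : (⟨a, ha⟩ : 𝒜 e) ∈ homComp 𝒜 (I ⊔ Ideal.span {a}) e :=
      Ideal.mem_sup_right (Ideal.mem_span_singleton_self a)
    rwa [← Submodule.eq_of_le_of_finrank_eq hle hdim.symm] at hmem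
  · rw [sup_eq_left.2 ((Ideal.span_singleton_le_iff_mem I).2 hmem)]

lemma finiteDimensional_of_standard (h0 : 𝒜 0 = 1) (hstd : ∀ m, 𝒜 (m + 1) = 𝒜 1 * 𝒜 m)
    [FiniteDimensional K (𝒜 1)] (e : ℕ) : FiniteDimensional K (𝒜 e) := by
  rw [FiniteDimensional, Module.Finite.iff_fg]
  induction e with
  | zero =>
    rw [h0, Submodule.one_eq_span]
    exact Submodule.fg_span_singleton _
  | succ e ih =>
    rw [hstd]
    exact (Module.Finite.iff_fg.1 inferInstance).mul ih

variable [GradedAlgebra 𝒜]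

lemma isHomogeneous_colon_span {I : Ideal R} (hI : I.IsHomogeneous 𝒜) {a : R} {i : ℕ}
    (ha : a ∈ 𝒜 i) : (I.colon (Ideal.span {a})).IsHomogeneous 𝒜 := by
  intro e x hx
  rw [Ideal.mem_colon_span_singleton] at hx ⊢
  rw [← DirectSum.coe_decompose_mul_add_of_right_mem 𝒜 ha]
  exact hI (e + i) hx

lemma isHomogeneous_wordIdeal {l : ℕ → R} (hl : ∀ t, l t ∈ 𝒜 1) (o : List Bool) :
    (wordIdeal l o).IsHomogeneous 𝒜 := by
  induction o using List.reverseRecOn with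
  | nil => exact Ideal.IsHomogeneous.bot 𝒜
  | append_singleton o a ih =>
    cases a
    · rw [wordIdeal_append_false]
      exact ih.sup (Ideal.homogeneous_span 𝒜 _ (by rintro x rfl; exact ⟨1, hl _⟩))
    · rw [wordIdeal_append_true]
      exact isHomogeneous_colon_span ih (hl _)

lemma irrelevant_le_of_standard (hstd : ∀ m, 𝒜 (m + 1) = 𝒜 1 * 𝒜 m) {I : Ideal R}
    (hI : 𝒜 1 ≤ I.restrictScalars K) : (HomogeneousIdeal.irrelevant 𝒜).toIdeal ≤ I := by
  rw [HomogeneousIdeal.toIdeal_irrelevant_le]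
  intro i hi
  obtain ⟨m, rfl⟩ := Nat.exists_eq_add_one_of_ne_zero hi.ne'
  have hmul : 𝒜 1 * 𝒜 m ≤ I.restrictScalars K :=
    Submodule.mul_le.2 fun a ha b _ => I.mul_mem_right b (hI ha)
  exact hstd m ▸ hmul

/-- Multiplication by a linear form, as a map from degree `e` to degree `e + 1`. -/
def mulLinearForm {a : R} (ha : a ∈ 𝒜 1) (e : ℕ) : 𝒜 e →ₗ[K] 𝒜 (e + 1) :=
  (LinearMap.mulRight K a).restrict fun _ hx => SetLike.mul_mem_graded hx ha

lemma homComp_colon_span (I : Ideal R) {a : R} (ha : a ∈ 𝒜 1) (e : ℕ) :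
    homComp 𝒜 (I.colon (Ideal.span {a})) e =
      (homComp 𝒜 I (e + 1)).comap (mulLinearForm ha e) :=
  Submodule.ext fun _ => Ideal.mem_colon_span_singleton

lemma homComp_sup_span_zero {I : Ideal R} (hI : I.IsHomogeneous 𝒜) {a : R} (ha : a ∈ 𝒜 1) :
    homComp 𝒜 (I ⊔ Ideal.span {a}) 0 = homComp 𝒜 I 0 := by
  refine le_antisymm (fun x hx => ?_) fun _ hx => Ideal.mem_sup_left hx
  rw [mem_homComp, sup_comm, Ideal.mem_span_singleton_sup] at hx
  obtain ⟨c, y, hy, hcy⟩ := hx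
  have hdecomp : (x : R) = DirectSum.decompose 𝒜 y 0 := by
    rw [← DirectSum.decompose_of_mem_same 𝒜 x.2, ← hcy, DirectSum.decompose_add,
      DirectSum.add_apply, Submodule.coe_add,
      DirectSum.coe_decompose_mul_of_right_mem_of_not_le 𝒜 ha one_pos.not_ge, zero_add]
  rw [mem_homComp, hdecomp]
  exact hI 0 hy

lemma homComp_sup_span_succ {I : Ideal R} (hI : I.IsHomogeneous 𝒜) {a : R} (ha : a ∈ 𝒜 1)
    (e : ℕ) : homComp 𝒜 (I ⊔ Ideal.span {a}) (e + 1) =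
      homComp 𝒜 I (e + 1) ⊔ LinearMap.range (mulLinearForm ha e) := by
  refine le_antisymm (fun x hx => ?_) (sup_le (fun _ hx => Ideal.mem_sup_left hx) ?_)
  · rw [mem_homComp, sup_comm, Ideal.mem_span_singleton_sup] at hx
    obtain ⟨c, y, hy, hcy⟩ := hx
    have hdecomp : x = DirectSum.decompose 𝒜 y (e + 1) +
        mulLinearForm ha e (DirectSum.decompose 𝒜 c e) := by
      ext
      calc (x : R) = DirectSum.decompose 𝒜 (c * a + y) (e + 1) := by
            rw [hcy, DirectSum.decompose_of_mem_same 𝒜 x.2]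
        _ = DirectSum.decompose 𝒜 c e * a + DirectSum.decompose 𝒜 y (e + 1) := by
            rw [DirectSum.decompose_add, DirectSum.add_apply, Submodule.coe_add,
              DirectSum.coe_decompose_mul_add_of_right_mem 𝒜 ha]
        _ = _ := add_comm _ _
    rw [hdecomp]
    exact Submodule.add_mem_sup (hI (e + 1) hy) (LinearMap.mem_range_self _ _)
  · rintro _ ⟨x, rfl⟩
    exact Ideal.mem_sup_right (Ideal.mul_mem_left _ _ (Ideal.mem_span_singleton_self a))

lemma span_range_eq_of_surjective {ι : Type*} (h0 : 𝒜 0 = 1) {g : MvPolynomial ι K →ₐ[K] R}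
    (hsurj : Function.Surjective g) (hg : ∀ i, g (MvPolynomial.X i) ∈ 𝒜 1) :
    Submodule.span K (Set.range fun i => g (MvPolynomial.X i)) = 𝒜 1 := by
  refine le_antisymm (Submodule.span_le.2 (Set.range_subset_iff.2 hg)) fun x hx => ?_
  suffices hcomp : ∀ p, (DirectSum.decompose 𝒜 (g p) 1 : R) ∈
      Submodule.span K (Set.range fun i => g (MvPolynomial.X i)) by
    obtain ⟨p, rfl⟩ := hsurj x
    exact DirectSum.decompose_of_mem_same 𝒜 hx ▸ hcomp p
  intro p
  induction p using MvPolynomial.induction_on with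
  | C c =>
    rw [MvPolynomial.algHom_C, DirectSum.decompose_of_mem_ne 𝒜
      (SetLike.algebraMap_mem_graded 𝒜 c) zero_ne_one]
    exact zero_mem _
  | add p q hp hq =>
    rw [map_add, DirectSum.decompose_add, DirectSum.add_apply, Submodule.coe_add]
    exact add_mem hp hq
  | mul_X p i _ =>
    have hscalar : (DirectSum.decompose 𝒜 (g p) 0 : R) ∈ (1 : Submodule K R) :=
      h0 ▸ (DirectSum.decompose 𝒜 (g p) 0).2
    obtain ⟨c, hc⟩ := Submodule.mem_one.1 hscalar
    rw [map_mul, ← zero_add 1, DirectSum.coe_decompose_mul_add_of_right_mem 𝒜 (hg i), ← hc,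
      ← Algebra.smul_def]
    exact Submodule.smul_mem _ c (Submodule.subset_span ⟨i, rfl⟩)

end GradedComponents

section PolyWordIdeal

variable {K R V : Type*} [Field K] [CommRing R] [Algebra K R] {𝒜 : ℕ → Submodule K R}
  [GradedAlgebra 𝒜] [AddCommGroup V] [Module K V]

lemma isPolyMap_mulLinearForm {a : V → R} (hpoly : IsPolyMap K a) (ha : ∀ v, a v ∈ 𝒜 1) {e : ℕ}
    (x : 𝒜 e) : IsPolyMap K fun v => mulLinearForm (ha v) e x :=
  (hpoly.linearMap_comp (LinearMap.mulLeft K (x : R))).codRestrict _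

variable [∀ e, FiniteDimensional K (𝒜 e)] {l : V → ℕ → R}

lemma isPolyFamily_homComp_wordIdeal (hl : ∀ v t, l v t ∈ 𝒜 1)
    (hpoly : ∀ t, IsPolyMap K fun v => l v t) (o : List Bool) (e : ℕ) :
    IsPolyFamily fun v => homComp 𝒜 (wordIdeal (l v) o) e := by
  induction o using List.reverseRecOn generalizing e with
  | nil =>
    have hbot : homComp 𝒜 (⊥ : Ideal R) e = ⊥ := by
      ext x
      simp [mem_homComp]
    simpa only [wordIdeal, wordIdealAux, hbot] using IsPolyFamily.bot
  | append_singleton o a ih =>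
    have hhom (v : V) := isHomogeneous_wordIdeal (hl v) o
    have hmul (e : ℕ) (x : 𝒜 e) := isPolyMap_mulLinearForm (hpoly o.length) (hl · o.length) x
    match a, e with
    | true, e =>
      simpa only [wordIdeal_append_true, homComp_colon_span _ (hl _ _)]
        using (ih (e + 1)).comap (hmul e)
    | false, 0 =>
      simpa only [wordIdeal_append_false, homComp_sup_span_zero (hhom _) (hl _ _)] using ih 0
    | false, e + 1 =>
      simpa only [wordIdeal_append_false, homComp_sup_span_succ (hhom _) (hl _ _)]
        using (ih (e + 1)).sup_range (hmul e)

variable [Infinite K]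

lemma exists_eventually_homDim_wordIdeal_eq (hl : ∀ v t, l v t ∈ 𝒜 1)
    (hpoly : ∀ t, IsPolyMap K fun v => l v t) (o : List Bool) (e : ℕ) :
    ∃ δ, ∀ᶠ v in zariskiGeneric K V, homDim 𝒜 (wordIdeal (l v) o) e = δ :=
  (isPolyFamily_homComp_wordIdeal hl hpoly o e).exists_eventually_finrank_eq

lemma eventually_mem_or_eventually_notMem_wordIdeal (hl : ∀ v t, l v t ∈ 𝒜 1)
    (hpoly : ∀ t, IsPolyMap K fun v => l v t) (o : List Bool) :
    (∀ᶠ v in zariskiGeneric K V, l v o.length ∈ wordIdeal (l v) o) ∨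
      ∀ᶠ v in zariskiGeneric K V, l v o.length ∉ wordIdeal (l v) o := by
  obtain ⟨δ, hδ⟩ := exists_eventually_homDim_wordIdeal_eq hl hpoly o 1
  obtain ⟨ε, hε⟩ := exists_eventually_homDim_wordIdeal_eq hl hpoly (o ++ [false]) 1
  have hiff : ∀ᶠ v in zariskiGeneric K V, l v o.length ∈ wordIdeal (l v) o ↔ ε = δ := by
    filter_upwards [hδ, hε] with v hδ hε
    rw [← hδ, ← hε, wordIdeal_append_false, homDim_sup_span_eq_iff (hl v _)]
  rcases eq_or_ne ε δ with heq | hne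
  · exact .inl (hiff.mono fun v hv => hv.2 heq)
  · exact .inr (hiff.mono fun v hv => mt hv.1 hne)

end PolyWordIdeal

section GeneralForms

variable {K R M : Type*} [Field K] [CommRing R] [Algebra K R] {𝒜 : ℕ → Submodule K R}
  {r : ℕ} {lin : M → R}

/-- The sequence of forms `lin (y 0), …, lin (y (r - 1))` attached to an `r`-tuple of parameters,
continued by zero so as to be indexed by `ℕ` like the forms in `GrProp`. -/
def formSeq (lin : M → R) (y : Fin r → M) (t : ℕ) : R :=
  if h : t < r then lin (y ⟨t, h⟩) else 0

lemma formSeq_of_lt (lin : M → R) (y : Fin r → M) {t : ℕ} (h : t < r) :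
    formSeq lin y t = lin (y ⟨t, h⟩) :=
  dif_pos h

lemma formSeq_mem (hlin : ∀ m, lin m ∈ 𝒜 1) (y : Fin r → M) (t : ℕ) : formSeq lin y t ∈ 𝒜 1 := by
  unfold formSeq
  split
  · exact hlin _
  · exact zero_mem _

lemma wordIdeal_formSeq_congr (lin : M → R) {y z : Fin r → M} {o : List Bool}
    (h : ∀ t : Fin r, t < o.length → y t = z t) :
    wordIdeal (formSeq lin y) o = wordIdeal (formSeq lin z) o := by
  refine wordIdeal_congr fun t ht => ?_
  unfold formSeq
  split
  · rw [h _ ht]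
  · rfl

variable [AddCommGroup M] [Module K M]

lemma isPolyMap_formSeq (hpoly : IsPolyMap K lin) (t : ℕ) :
    IsPolyMap K fun y : Fin r → M => formSeq lin y t := by
  unfold formSeq
  split
  · exact hpoly.comp_linearMap (LinearMap.proj (φ := fun _ : Fin r => M) _)
  · exact isPolyMap_const 0

variable [GradedAlgebra 𝒜] [∀ e, FiniteDimensional K (𝒜 e)] [Infinite K]

lemma eventually_formSeq_notMem_wordIdeal (hstd : ∀ m, 𝒜 (m + 1) = 𝒜 1 * 𝒜 m)
    (hpoly : IsPolyMap K lin) (hspan : Submodule.span K (Set.range lin) = 𝒜 1) {o : List Bool}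
    (ho : o.length < r) :
    ∀ᶠ y in zariskiGeneric K (Fin r → M),
      ¬ (HomogeneousIdeal.irrelevant 𝒜).toIdeal ≤ wordIdeal (formSeq lin y) o →
        formSeq lin y o.length ∉ wordIdeal (formSeq lin y) o := by
  have hlin (m : M) : lin m ∈ 𝒜 1 := hspan ▸ Submodule.subset_span ⟨m, rfl⟩
  rcases eventually_mem_or_eventually_notMem_wordIdeal (formSeq_mem (r := r) hlin)
    (isPolyMap_formSeq hpoly) o with hmem | hnotMem
  · filter_upwards [eventually_eventually_update ⟨o.length, ho⟩ hmem] with y hy hirr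
    refine absurd (irrelevant_le_of_standard hstd ?_) hirr
    have hgeneric : ∀ᶠ m in zariskiGeneric K M,
        lin m ∈ (wordIdeal (formSeq lin y) o).restrictScalars K := by
      refine hy.mono fun m hm => ?_
      rwa [formSeq_of_lt _ _ ho, Function.update_self, wordIdeal_formSeq_congr lin fun t ht =>
        Function.update_of_ne (Fin.ne_of_lt (by exact ht)) _ _] at hm
    rw [← hspan, Submodule.span_le]
    exact Set.range_subset_iff.2 (hpoly.forall_mem_of_eventually_mem hgeneric)
  · exact hnotMem.mono fun y hy _ => hy

lemma eventually_homDim_wordIdeal_true_false_le (hlin : ∀ m, lin m ∈ 𝒜 1)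
    (hpoly : IsPolyMap K lin) {o : List Bool} (ho : o.length + 2 ≤ r) (e : ℕ) :
    ∀ᶠ y in zariskiGeneric K (Fin r → M),
      homDim 𝒜 (wordIdeal (formSeq lin y) (o ++ [true, false])) e ≤
        homDim 𝒜 (wordIdeal (formSeq lin y) (o ++ [false, true])) e := by
  have hi : o.length < r := by omega
  have hj : o.length + 1 < r := by omega
  let swap : (Fin r → M) ≃ₗ[K] (Fin r → M) :=
    LinearEquiv.funCongrLeft K M (Equiv.swap ⟨o.length, hi⟩ ⟨o.length + 1, hj⟩)
  have hswap : Filter.Tendsto swap (zariskiGeneric K (Fin r → M)) (zariskiGeneric K (Fin r → M)) :=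
    tendsto_zariskiGeneric_of_surjective (σ := swap.toLinearMap.toAffineMap) swap.surjective
  obtain ⟨δ, hδ⟩ := exists_eventually_homDim_wordIdeal_eq (formSeq_mem (r := r) hlin)
    (isPolyMap_formSeq hpoly) (o ++ [true, false]) e
  filter_upwards [hδ, hswap.eventually hδ] with y hy hsy
  have hfst : formSeq lin (swap y) o.length = formSeq lin y (o.length + 1) := by
    simp [formSeq_of_lt, hi, hj, swap, LinearMap.funLeft]
  have hsnd : formSeq lin (swap y) (o.length + 1) = formSeq lin y o.length := by
    simp [formSeq_of_lt, hi, hj, swap, LinearMap.funLeft]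
  have hinit : wordIdeal (formSeq lin (swap y)) o = wordIdeal (formSeq lin y) o :=
    wordIdeal_formSeq_congr lin fun t ht => congrArg y <|
      Equiv.swap_apply_of_ne_of_ne (Fin.ne_of_lt (by exact ht))
        (Fin.ne_of_lt (Nat.lt_succ_of_lt ht))
  rw [hy, ← hsy, wordIdeal_append_true_false, wordIdeal_append_false_true, hfst, hsnd, hinit]
  exact homDim_mono (colon_sup_span_le_sup_span_colon _ _ _) e

end GeneralForms

section WordLength

variable {K R : Type*} [Field K] [CommRing R] [Algebra K R] {𝒜 : ℕ → Submodule K R}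
  [GradedAlgebra 𝒜] [FiniteDimensional K (𝒜 1)] {l : ℕ → R} {r : ℕ}

lemma irrelevant_le_or_count_false_le_homDim (hl : ∀ t, l t ∈ 𝒜 1)
    (hnotMem : ∀ o : List Bool, o.length < r →
      ¬ (HomogeneousIdeal.irrelevant 𝒜).toIdeal ≤ wordIdeal l o → l o.length ∉ wordIdeal l o)
    {o : List Bool} (ho : o.length ≤ r) :
    (HomogeneousIdeal.irrelevant 𝒜).toIdeal ≤ wordIdeal l o ∨
      o.count false ≤ homDim 𝒜 (wordIdeal l o) 1 := by
  induction o using List.reverseRecOn with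
  | nil => exact .inr (Nat.zero_le _)
  | append_singleton o a ih =>
    have hlt : o.length < r := by simpa using ho
    have hmono := wordIdeal_le_wordIdeal_append_singleton l o a
    by_cases hirr : (HomogeneousIdeal.irrelevant 𝒜).toIdeal ≤ wordIdeal l o
    · exact .inl (hirr.trans hmono)
    have hcount := (ih hlt.le).resolve_left hirr
    have hdim := homDim_mono (𝒜 := 𝒜) hmono 1
    refine .inr ?_
    cases a
    · have hne : homDim 𝒜 (wordIdeal l (o ++ [false])) 1 ≠ homDim 𝒜 (wordIdeal l o) 1 := by
        rw [wordIdeal_append_false, Ne, homDim_sup_span_eq_iff (hl _)]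
        exact hnotMem o hlt hirr
      simp only [List.count_append, List.count_singleton_self]
      omega
    · simpa using hcount.trans hdim

lemma irrelevant_le_wordIdeal_of_count_true_lt (hstd : ∀ m, 𝒜 (m + 1) = 𝒜 1 * 𝒜 m)
    (hl : ∀ t, l t ∈ 𝒜 1)
    (hnotMem : ∀ o : List Bool, o.length < r →
      ¬ (HomogeneousIdeal.irrelevant 𝒜).toIdeal ≤ wordIdeal l o → l o.length ∉ wordIdeal l o)
    {d : ℕ} (hr : Module.finrank K (𝒜 1) + d ≤ r + 1) {o : List Bool} (ho : o.length = r)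
    (hd : o.count true < d) :
    (HomogeneousIdeal.irrelevant 𝒜).toIdeal ≤ wordIdeal l o := by
  refine (irrelevant_le_or_count_false_le_homDim hl hnotMem ho.le).elim id fun hcount => ?_
  have hlength := List.count_true_add_count_false o
  have hle : homDim 𝒜 (wordIdeal l o) 1 ≤ Module.finrank K (𝒜 1) := Submodule.finrank_le _
  have hge : Module.finrank K (𝒜 1) ≤ homDim 𝒜 (wordIdeal l o) 1 := by omega
  have htop : homComp 𝒜 (wordIdeal l o) 1 = ⊤ :=
    Submodule.eq_top_of_finrank_eq (hle.antisymm hge)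
  exact irrelevant_le_of_standard hstd (Submodule.comap_subtype_eq_top.1 htop)

end WordLength

theorem eventually_GrProp_formSeq {K R M : Type*} [Field K] [Infinite K] [CommRing R] [Algebra K R]
    {𝒜 : ℕ → Submodule K R} [GradedAlgebra 𝒜] [∀ e, FiniteDimensional K (𝒜 e)]
    [AddCommGroup M] [Module K M] {lin : M → R} (hstd : ∀ m, 𝒜 (m + 1) = 𝒜 1 * 𝒜 m)
    (hpoly : IsPolyMap K lin) (hspan : Submodule.span K (Set.range lin) = 𝒜 1) {d r : ℕ}
    (hr : Module.finrank K (𝒜 1) + d ≤ r + 1) :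
    ∀ᶠ y in zariskiGeneric K (Fin r → M), GrProp 𝒜 (formSeq lin y) r d := by
  have hlin (m : M) : lin m ∈ 𝒜 1 := hspan ▸ Submodule.subset_span ⟨m, rfl⟩
  have hnotMem : ∀ᶠ y in zariskiGeneric K (Fin r → M),
      ∀ o ∈ {o : List Bool | o.length < r},
        ¬ (HomogeneousIdeal.irrelevant 𝒜).toIdeal ≤ wordIdeal (formSeq lin y) o →
          formSeq lin y o.length ∉ wordIdeal (formSeq lin y) o :=
    (Filter.eventually_all_finite (List.finite_length_lt Bool r)).2 fun _ ho =>
      eventually_formSeq_notMem_wordIdeal hstd hpoly hspan ho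
  have hdim : ∀ᶠ y in zariskiGeneric K (Fin r → M),
      ∀ o ∈ {o : List Bool | o.length ≤ r}, o.length + 2 ≤ r →
        homDim 𝒜 (wordIdeal (formSeq lin y) (o ++ [true, false])) (d - o.count true - 1) ≤
          homDim 𝒜 (wordIdeal (formSeq lin y) (o ++ [false, true])) (d - o.count true - 1) :=
    (Filter.eventually_all_finite (List.finite_length_le Bool r)).2 fun _ _ =>
      Filter.eventually_imp_distrib_left.2 fun ho =>
        eventually_homDim_wordIdeal_true_false_le hlin hpoly ho _
  filter_upwards [hnotMem, hdim] with y hnotMem hdim o ho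
  exact ⟨fun hirr hlt => hnotMem o hlt hirr,
    irrelevant_le_wordIdeal_of_count_true_lt hstd (formSeq_mem hlin y) hnotMem hr,
    hdim o ho⟩

section Segre

variable {K E J : Type*} [Field K] [AddCommGroup E] [Module K E] [Fintype J] [DecidableEq J]
  {ι : J → Type*} [∀ j, Fintype (ι j)]

/-- The image of the product `∏ j, ∑ i, m j i • X_{j,i}` of linear forms with coefficients `m`,
when each Segre monomial `∏ j, X_{j, i j}` is sent to `x i`. -/
def segreCombination (x : (∀ j, ι j) → E) (m : ∀ j, ι j → K) : E :=
  ∑ i, (∏ j, m j (i j)) • x i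

lemma isPolyMap_segreCombination (x : (∀ j, ι j) → E) :
    IsPolyMap K (segreCombination (K := K) x) := by
  intro φ
  have expand : (fun m : ∀ j, ι j → K => φ (segreCombination x m)) =
      ∑ i, (∏ j, fun m : ∀ j, ι j → K => m j (i j)) * fun _ => φ (x i) := by
    funext m
    simp [segreCombination]
  rw [expand]
  exact sum_mem fun i _ => mul_mem
    (prod_mem fun j _ => coe_mem_polyFuns
      ((LinearMap.proj (i j) : (ι j → K) →ₗ[K] K) ∘ₗ LinearMap.proj (φ := fun j => ι j → K) j))
    (const_mem_polyFuns _)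

lemma segreCombination_single [∀ j, DecidableEq (ι j)] (x : (∀ j, ι j) → E) (i : ∀ j, ι j) :
    segreCombination x (fun j => Pi.single (i j) (1 : K)) = x i := by
  have hcoeff (k : ∀ j, ι j) :
      ∏ j, (Pi.single (i j) 1 : ι j → K) (k j) = if k = i then 1 else 0 := by
    simp only [Pi.single_apply, Finset.prod_ite_zero, Finset.prod_const_one, Finset.mem_univ,
      forall_const, funext_iff]
  simp [segreCombination, hcoeff]

lemma span_range_segreCombination (x : (∀ j, ι j) → E) :
    Submodule.span K (Set.range (segreCombination (K := K) x)) =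
      Submodule.span K (Set.range x) := by
  classical
  refine le_antisymm (Submodule.span_le.2 (Set.range_subset_iff.2 fun m => ?_))
    (Submodule.span_mono (Set.range_subset_iff.2 fun i => ⟨_, segreCombination_single x i⟩))
  exact sum_mem fun i _ => Submodule.smul_mem _ _ (Submodule.subset_span ⟨i, rfl⟩)

end Segre

theorem segre_products_satisfy_Gr_general
    {K R : Type*} [Field K] [Infinite K] [CommRing R] [Algebra K R]
    (𝒜 : ℕ → Submodule K R) [GradedAlgebra 𝒜]
    (h0 : 𝒜 0 = (1 : Submodule K R)) (hstd : ∀ m, 𝒜 (m + 1) = 𝒜 1 * 𝒜 m)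
    {J : Type*} [Fintype J] [DecidableEq J] {ι : J → Type*} [∀ j, Fintype (ι j)]
    (x : (∀ j, ι j) → R) (hx : Submodule.span K (Set.range x) = 𝒜 1)
    (d r : ℕ) (hr : Module.finrank K (𝒜 1) + d ≤ r + 1) :
    ∃ U : Set (Fin r → ∀ j, ι j → K), IsZOpen K U ∧ U.Nonempty ∧
      ∀ y ∈ U, GrProp 𝒜
        (fun t => if h : t < r then ∑ i, (∏ j, y ⟨t, h⟩ j (i j)) • x i else 0) r d := by
  have hfin : FiniteDimensional K (𝒜 1) :=
    hx ▸ FiniteDimensional.span_of_finite K (Set.finite_range x)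
  have hfin_all := finiteDimensional_of_standard h0 hstd
  exact eventually_GrProp_formSeq hstd (isPolyMap_segreCombination x)
    ((span_range_segreCombination x).trans hx) hr

/-- **(Gr,d) for products of general linear forms (Segre case).** `R` is a homomorphic
image, by a graded surjection `g`, of the Segre ring
`S = K[X_{1,i₁}⋯X_{s,i_s}]` (presented as the quotient of the polynomial ring on
variables indexed by `(j : Fin s) → Fin (nn j)`, one for each Segre monomial, by the
kernel of the evaluation `π` sending the variable `i` to `∏ j, X_{j, i j}`), the
generators going to degree-one elements of `R`.  With `n = dim_K R_1`, `d > 0` and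
`r ≥ d + n - 1`, for general linear forms `l_{t,j}` of `K[X_{j,1},…,X_{j,n_j}]`
(`t = 1,…,r`), encoded by their coefficient tuples `y`, the `r` linear forms of `R`
given by the images of the products `l_{t,1}⋯l_{t,s}` — namely
`∑ i, (∏ j, y t j (i j)) • g(X i)` — satisfy property (Gr,d). -/
theorem segre_products_satisfy_Gr
    {K R : Type*} [Field K] [Infinite K] [CommRing R] [Algebra K R]
    (𝒜 : ℕ → Submodule K R) [GradedAlgebra 𝒜]
    (h0 : 𝒜 0 = (1 : Submodule K R)) (hstd : ∀ m, 𝒜 (m + 1) = 𝒜 1 * 𝒜 m)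
    [FiniteDimensional K (𝒜 1)]
    (s : ℕ) (nn : Fin s → ℕ)
    (g : MvPolynomial ((j : Fin s) → Fin (nn j)) K →ₐ[K] R)
    (hsurj : Function.Surjective g)
    (hker : RingHom.ker (MvPolynomial.aeval
        (fun i : (j : Fin s) → Fin (nn j) =>
          ∏ j : Fin s, (MvPolynomial.X ⟨j, i j⟩ :
            MvPolynomial ((j : Fin s) × Fin (nn j)) K)) :
        MvPolynomial ((j : Fin s) → Fin (nn j)) K →ₐ[K]
          MvPolynomial ((j : Fin s) × Fin (nn j)) K) ≤ RingHom.ker g)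
    (hg1 : ∀ i, g (MvPolynomial.X i) ∈ 𝒜 1)
    (d r : ℕ) (hd : 0 < d) (hr : Module.finrank K (𝒜 1) + d ≤ r + 1) :
    ∃ U : Set (Fin r → (j : Fin s) → Fin (nn j) → K), IsZOpen K U ∧ U.Nonempty ∧
      ∀ y ∈ U, GrProp 𝒜
        (fun t => if h : t < r then
            ∑ i : (j : Fin s) → Fin (nn j),
              (∏ j : Fin s, y ⟨t, h⟩ j (i j)) • g (MvPolynomial.X i)
          else 0) r d :=
  segre_products_satisfy_Gr_general 𝒜 h0 hstd _ (span_range_eq_of_surjective h0 hsurj hg1) d r hr
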